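/- arXiv:1203.2852 — 2 statements merged into one kernel-verified Lean document; each statement's English description precedes it below -/
import Mathlib

section
/- Let w ∈ (−1/3, 1) and β ∈ ℝ satisfy β(1−w) > 2w and 9β²(1−w)² + 6β(1−w) + 4 > (1−3w)² (so that P lies in the state space B_III). Then tr Df(P) < 0 and det Df(P) > 0, and consequently every (complex) eigenvalue of the Jacobian matrix Df(P) has strictly negative real part; i.e., P is a hyperbolic sink of the planar type III system whenever it lies in B_III. -/
/-! At `P` both factors `2 − a(1−Σ²) − HΣ` and `(1−H²) + a(HΣ+β)`, with `a = (3/2)(1−w)`, vanish,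
so the Jacobian only contains derivatives of these factors. This gives
`tr Df(P) = −(H²−1)Σ − a(1−Σ²)H` and `det Df(P) = 2(H²−1)(1−Σ²)(H − aΣ)²`. The first hypothesis says
`d > (1+3w)²`, hence `0 < Σ < 1`; the second says `H > 1`; and `H − aΣ = √d/2 ≠ 0`. So the trace is
negative and the determinant positive, which for a real `2 × 2` matrix puts both eigenvalues in the
open left half-plane. -/

open Polynomial

/-- First component of the type III vector field: `−(1−H²)(2 − (3/2)(1−w)(1−Σ²) − HΣ)`. -/
noncomputable def fIII1 (w β H S : ℝ) : ℝ :=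
  -(1 - H ^ 2) * (2 - 3 / 2 * (1 - w) * (1 - S ^ 2) - H * S)

/-- Second component of the type III vector field: `−(1−Σ²)((1−H²) + (3/2)(1−w)(HΣ+β))`. -/
noncomputable def fIII2 (w β H S : ℝ) : ℝ :=
  -(1 - S ^ 2) * ((1 - H ^ 2) + 3 / 2 * (1 - w) * (H * S + β))

/-- The Jacobian matrix (matrix of partial derivatives) of the type III vector field. -/
noncomputable def JacIII (w β H S : ℝ) : Matrix (Fin 2) (Fin 2) ℝ :=
  !![deriv (fun x => fIII1 w β x S) H, deriv (fun y => fIII1 w β H y) S;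
     deriv (fun x => fIII2 w β x S) H, deriv (fun y => fIII2 w β H y) S]

/-- The Jacobian at a general point, computed by the product rule. -/
theorem JacIII_eq (w β H S : ℝ) :
    JacIII w β H S =
      !![2 * H * (2 - 3 / 2 * (1 - w) * (1 - S ^ 2) - H * S) + (1 - H ^ 2) * S,
         -(1 - H ^ 2) * (3 * (1 - w) * S - H);
         -(1 - S ^ 2) * (-2 * H + 3 / 2 * (1 - w) * S),
         2 * S * ((1 - H ^ 2) + 3 / 2 * (1 - w) * (H * S + β))
           - (1 - S ^ 2) * (3 / 2 * (1 - w) * H)] := by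
  have hid (x : ℝ) : HasDerivAt (fun y : ℝ => y) 1 x := hasDerivAt_id' x
  have hsq (x : ℝ) : HasDerivAt (fun y : ℝ => 1 - y ^ 2) (-(2 * x)) x := by
    simpa using ((hid x).pow 2).const_sub 1
  have h11 := (hsq H).neg.mul
    (((hid H).mul_const S).const_sub (2 - 3 / 2 * (1 - w) * (1 - S ^ 2)))
  have h12 := ((((hsq S).const_mul (3 / 2 * (1 - w))).const_sub 2).sub
    ((hid S).const_mul H)).const_mul (-(1 - H ^ 2))
  have h21 := ((hsq H).add
    ((((hid H).mul_const S).add_const β).const_mul (3 / 2 * (1 - w)))).const_mul (-(1 - S ^ 2))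
  have h22 := (hsq S).neg.mul
    (((((hid S).const_mul H).add_const β).const_mul (3 / 2 * (1 - w))).const_add (1 - H ^ 2))
  have e11 : deriv (fun x => fIII1 w β x S) H = _ := h11.deriv
  have e12 : deriv (fun y => fIII1 w β H y) S = _ := h12.deriv
  have e21 : deriv (fun x => fIII2 w β x S) H = _ := h21.deriv
  have e22 : deriv (fun y => fIII2 w β H y) S = _ := h22.deriv
  rw [JacIII, e11, e12, e21, e22]
  ext i j
  fin_cases i <;> fin_cases j <;> simp [-mul_eq_mul_left_iff] <;> ring

/-- Routh–Hurwitz criterion in dimension two. -/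
theorem re_neg_of_isRoot_charpoly (J : Matrix (Fin 2) (Fin 2) ℝ) (ht : J.trace < 0)
    (hd : 0 < J.det) (z : ℂ) (hz : (J.map (fun r : ℝ => (r : ℂ))).charpoly.IsRoot z) :
    z.re < 0 := by
  rw [Matrix.trace_fin_two] at ht
  rw [Matrix.det_fin_two] at hd
  rw [Polynomial.IsRoot, Matrix.charpoly_fin_two, Matrix.trace_fin_two, Matrix.det_fin_two] at hz
  simp only [Matrix.map_apply, eval_add, eval_sub, eval_mul, eval_pow, eval_X, eval_C] at hz
  have hre := congrArg Complex.re hz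
  have him := congrArg Complex.im hz
  simp [pow_two] at hre him
  -- The imaginary part of the equation reads `y (2x − tr J) = 0` for `z = x + iy`.
  have hy : z.im * (2 * z.re - (J 0 0 + J 1 1)) = 0 := by linarith
  rcases mul_eq_zero.mp hy with h | h
  · rw [h] at hre
    by_contra! hx
    nlinarith [mul_nonneg hx hx, mul_nonneg hx (neg_pos.mpr ht).le]
  · linarith

/-- If `β(1−w) > 2w` and `9β²(1−w)² + 6β(1−w) + 4 > (1−3w)²` (so that `P` lies in the
state space `B_III`, where `d = (1−3w)² + 6β(1−w)` and
`P = ((2+3β(1−w))/√d, (1+3w)/√d)`), then `tr Df(P) < 0` and `det Df(P) > 0`, and every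
complex eigenvalue (root of the characteristic polynomial) of `Df(P)` has strictly
negative real part: `P` is a hyperbolic sink whenever it lies in `B_III`. -/
theorem P_hyperbolic_sink (w β : ℝ) (hw : w ∈ Set.Ioo (-(1 / 3) : ℝ) 1)
    (h₁ : 2 * w < β * (1 - w))
    (h₂ : (1 - 3 * w) ^ 2 < 9 * β ^ 2 * (1 - w) ^ 2 + 6 * β * (1 - w) + 4) :
    let d : ℝ := (1 - 3 * w) ^ 2 + 6 * β * (1 - w)
    let J : Matrix (Fin 2) (Fin 2) ℝ :=
      JacIII w β ((2 + 3 * β * (1 - w)) / Real.sqrt d) ((1 + 3 * w) / Real.sqrt d)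
    Matrix.trace J < 0 ∧ 0 < J.det ∧
      ∀ z : ℂ, (J.map (fun r : ℝ => (r : ℂ))).charpoly.IsRoot z → z.re < 0 := by
  intro d J
  obtain ⟨hw1, hw2⟩ := hw
  have hw3 : 0 < 1 + 3 * w := by linarith
  have hdS : (1 + 3 * w) ^ 2 < d := by simp only [d]; nlinarith
  have hd : 0 < d := lt_trans (by positivity) hdS
  have hs : 0 < Real.sqrt d := Real.sqrt_pos.mpr hd
  have hss : Real.sqrt d ^ 2 = d := Real.sq_sqrt hd.le
  have hb : 0 < 2 + 3 * β * (1 - w) := by linarith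
  obtain ⟨H, hH⟩ : ∃ H, H = (2 + 3 * β * (1 - w)) / Real.sqrt d := ⟨_, rfl⟩
  obtain ⟨S, hS⟩ : ∃ S, S = (1 + 3 * w) / Real.sqrt d := ⟨_, rfl⟩
  have hH0 : 0 < H := hH ▸ div_pos hb hs
  have hS0 : 0 < S := hS ▸ div_pos hw3 hs
  have hHH : H ^ 2 = (2 + 3 * β * (1 - w)) ^ 2 / d := by rw [hH, div_pow, hss]
  have hSS : S ^ 2 = (1 + 3 * w) ^ 2 / d := by rw [hS, div_pow, hss]
  have hHS : H * S = (2 + 3 * β * (1 - w)) * (1 + 3 * w) / d := by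
    rw [hH, hS, div_mul_div_comm, ← pow_two, hss]
  have hH1 : 0 < H ^ 2 - 1 := by
    rw [hHH, sub_pos, one_lt_div hd]
    simp only [d]
    nlinarith
  have hS1 : 0 < 1 - S ^ 2 := by
    rw [hSS, sub_pos, div_lt_one hd]
    exact hdS
  -- `P` is an equilibrium: the second factor of each component vanishes there.
  have g1 : 2 - 3 / 2 * (1 - w) * (1 - S ^ 2) - H * S = 0 := by
    rw [hSS, hHS]
    field_simp
    simp only [d]
    ring
  have g2 : (1 - H ^ 2) + 3 / 2 * (1 - w) * (H * S + β) = 0 := by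
    rw [hHH, hHS]
    field_simp
    simp only [d]
    ring
  have hne : H - 3 / 2 * (1 - w) * S = Real.sqrt d / 2 := by
    rw [hH, hS]
    field_simp
    rw [hss]
    simp only [d]
    ring
  have hJ : J = !![(1 - H ^ 2) * S, -(1 - H ^ 2) * (3 * (1 - w) * S - H);
      -(1 - S ^ 2) * (-2 * H + 3 / 2 * (1 - w) * S), -(1 - S ^ 2) * (3 / 2 * (1 - w) * H)] := by
    simp only [J]
    rw [← hH, ← hS, JacIII_eq, g1, g2]
    simp only [mul_zero, zero_add, zero_sub, neg_mul]
  have htr : J.trace < 0 := by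
    rw [hJ, Matrix.trace_fin_two_of]
    have h1 := mul_pos hH1 hS0
    have h2 := mul_pos (mul_pos hS1 (sub_pos.mpr hw2)) hH0
    linarith
  have hdet : 0 < J.det := by
    have h : J.det = 2 * ((H ^ 2 - 1) * (1 - S ^ 2)) * (H - 3 / 2 * (1 - w) * S) ^ 2 := by
      rw [hJ, Matrix.det_fin_two_of]
      ring
    rw [h, hne]
    positivity
  exact ⟨htr, hdet, re_neg_of_isRoot_charpoly J htr hdet⟩
end

section
/- Let w ∈ (−1/3, 1) and consider the perfect-fluid LRS Bianchi type VIII system (the full system with anisotropy function u ≡ w, so the term 3Ω(u(s)−w) vanishes). Every maximal solution with initial condition in the state space X_VIII is defined for all t ∈ ℝ, remains in X_VIII, and its image is contained in a compact subset of ℝ³; moreover, every ω-limit point (H,Σ,M) of such a solution satisfies M = 0, and every α-limit point satisfies H = 1. (Forward limit sets lie in the closure of the type III boundary, backward limit sets in the closure of the type II boundary.) -/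
/-!
Write `v = Σ/H`. Along a solution in `X_VIII`, the quantities `H − 1`, `M` and `Ω` each satisfy a
linear equation `f' = f g`, so they keep their sign; since `X_VIII` is exactly
`{H > 1, M > 0, Ω > 0}`, the state space is invariant (`IsSol.of_mem`). There `0 ≤ q ≤ 2`,
`|Σ| < 1` and `M² < 12`, so only `H` has to be bounded.

*Past.* `Y = Ω³M²/(H²−1)⁴` satisfies `Y' = −3(1+3w) H Y`, so it grows at least exponentially
backward in time, while `Ω³M² ≤ 12`. Hence `H` is bounded on the past and tends to `1` as
`t → −∞` (`IsSol.backward_bound`, `IsSol.alpha`).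

*Future bound on `H`.* While `Σ < 0`, the function `(1−Σ²) H⁻² e^{4v}` is nondecreasing, which bounds
`H`. The region `Σ ≥ 0` is forward invariant, and in it `H⁻² e^{4v}` is nondecreasing whenever
`H² ≥ 5`; this again bounds `H` (`IsSol.H_bdd_forward`).

A maximal solution that stays in a compact set is global (`mem_of_maximal`); applied to the solution
and to its time reversal, this gives the existence interval `ℝ`.

*Future limit points.* For a global solution, `Σ < 0` cannot persist (`IsSol.exists_S_nonneg`).
Once `Σ ≥ 0`, the function `L = log (M²/(H²−1)) − 3v` satisfies `L' ≤ −3(H²−1)/H < 0`, and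
`D = (H²−1)⁴/(H⁶M²)` is nondecreasing at all times. If `M` did not vanish at some `ω`-limit point,
then `L` would be bounded below along a sequence of times, hence everywhere. So
`M² ≥ const · (H²−1)`, and by monotonicity of `D` also `H²−1` is bounded below. But then `L'` is
bounded above by a negative constant and `L → −∞`, a contradiction (`IsSol.omega`).
-/

open Filter

/-- The perfect-fluid LRS Bianchi type VIII vector field (anisotropy function `u ≡ w`):
`H' = −(1−H²)(q−HΣ)`, `Σ' = −(2−q)HΣ − (1−H²)(1−Σ²) + M²/3`,
`M' = M(qH − 4Σ + (1−H²)Σ)`, where `Ω = 1 − Σ² − M²/12` and `q = 2Σ² + ((1+3w)/2)Ω`. -/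
noncomputable def Fpf (w : ℝ) (p : ℝ × ℝ × ℝ) : ℝ × ℝ × ℝ :=
  let H := p.1
  let S := p.2.1
  let M := p.2.2
  let Om := 1 - S ^ 2 - M ^ 2 / 12
  let q := 2 * S ^ 2 + (1 + 3 * w) / 2 * Om
  (-(1 - H ^ 2) * (q - H * S),
   -(2 - q) * H * S - (1 - H ^ 2) * (1 - S ^ 2) + M ^ 2 / 3,
   M * (q * H - 4 * S + (1 - H ^ 2) * S))

/-- The LRS Bianchi type VIII state space
`X_VIII = {(H,Σ,M) : H > 1, −1 < Σ < 1, 0 < M < √(12(1−Σ²))}`. -/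
noncomputable def XVIII : Set (ℝ × ℝ × ℝ) :=
  {p : ℝ × ℝ × ℝ | 1 < p.1 ∧ -1 < p.2.1 ∧ p.2.1 < 1 ∧
    0 < p.2.2 ∧ p.2.2 < Real.sqrt (12 * (1 - p.2.1 ^ 2))}

/-! ### Monotonicity, positivity and continuation of solutions -/

theorem le_of_deriv_nonneg {f f' : ℝ → ℝ} {a b : ℝ} (hab : a ≤ b)
    (hf : ∀ t ∈ Set.Icc a b, HasDerivAt f (f' t) t)
    (h0 : ∀ t ∈ Set.Ioo a b, 0 ≤ f' t) : f a ≤ f b := by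
  have hm : MonotoneOn f (Set.Icc a b) := by
    apply monotoneOn_of_deriv_nonneg (convex_Icc a b)
    · exact fun t ht => (hf t ht).continuousAt.continuousWithinAt
    · intro t ht
      exact (hf t (interior_subset ht)).differentiableAt.differentiableWithinAt
    · intro t ht
      rw [(hf t (interior_subset ht)).deriv]
      rw [interior_Icc] at ht
      exact h0 t ht
  exact hm (Set.left_mem_Icc.2 hab) (Set.right_mem_Icc.2 hab) hab

/-- A function that starts at or above the level `c` and does not decrease while it is below `c`
never falls below `c`. The proof uses the last time at which the level `c` is attained or
exceeded. -/
theorem barrier {f f' : ℝ → ℝ} {a b c : ℝ} (hab : a ≤ b)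
    (hf : ∀ t ∈ Set.Icc a b, HasDerivAt f (f' t) t) (ha : c ≤ f a)
    (h0 : ∀ t ∈ Set.Icc a b, f t < c → 0 ≤ f' t) : c ≤ f b := by
  by_contra! hb
  have hcont : ContinuousOn f (Set.Icc a b) :=
    fun t ht => (hf t ht).continuousAt.continuousWithinAt
  have hcpt : IsCompact (Set.Icc a b ∩ f ⁻¹' Set.Ici c) :=
    isCompact_Icc.of_isClosed_subset
      (hcont.preimage_isClosed_of_isClosed isClosed_Icc isClosed_Ici) Set.inter_subset_left
  obtain ⟨T, ⟨hT, hTc⟩, hTmax⟩ := hcpt.exists_isGreatest ⟨a, ⟨le_rfl, hab⟩, ha⟩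
  have : f T ≤ f b := by
    apply le_of_deriv_nonneg (f' := f') hT.2
    · exact fun t ht => hf t ⟨hT.1.trans ht.1, ht.2⟩
    · intro t ht
      have htI : t ∈ Set.Icc a b := ⟨hT.1.trans ht.1.le, ht.2.le⟩
      apply h0 t htI
      by_contra! hc
      exact absurd (hTmax ⟨htI, hc⟩) (not_le.2 ht.1)
  have hTc' : c ≤ f T := hTc
  linarith

/-- The integrating factor `exp (-∫ g)` turns `f' = f g` into a constant, so `f` keeps its sign. -/
theorem pos_of_linear {f g : ℝ → ℝ} {s : Set ℝ} (hopen : IsOpen s) (hconn : s.OrdConnected)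
    (hf : ∀ t ∈ s, HasDerivAt f (f t * g t) t) (hg : ContinuousOn g s) {t₀ : ℝ} (ht₀ : t₀ ∈ s)
    (h0 : 0 < f t₀) : ∀ t ∈ s, 0 < f t := by
  have hG : ∀ t ∈ s, HasDerivAt (fun t => ∫ r in t₀..t, g r) (g t) t := by
    intro t ht
    have hsub : Set.uIcc t₀ t ⊆ s := hconn.uIcc_subset ht₀ ht
    exact intervalIntegral.integral_hasDerivAt_right
      ((hg.mono hsub).intervalIntegrable)
      (hg.stronglyMeasurableAtFilter hopen t ht) (hg.continuousAt (hopen.mem_nhds ht))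
  have hd : ∀ t ∈ s, HasDerivAt (fun t => f t * Real.exp (-∫ r in t₀..t, g r)) 0 t := by
    intro t ht
    have := (hf t ht).mul (hG t ht).neg.exp
    refine this.congr_deriv ?_
    ring
  intro t ht
  have hc : f t * Real.exp (-∫ r in t₀..t, g r) = f t₀ * Real.exp (-∫ r in t₀..t₀, g r) := by
    apply hopen.is_const_of_deriv_eq_zero (hconn.isPreconnected)
      (fun t ht => (hd t ht).differentiableAt.differentiableWithinAt)
      (fun t ht => (hd t ht).deriv) ht ht₀
  have h1 : 0 < f t * Real.exp (-∫ r in t₀..t, g r) := by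
    rw [hc]; positivity
  exact pos_of_mul_pos_left h1 (Real.exp_pos _).le

/-- A solution of `x' = F(x)` with `F` of class `C¹` that admits no extension and stays in a compact
set to the future of `t₀` exists for all `t ≥ t₀`. Otherwise it is Lipschitz up to the right endpoint
`b` of its interval, hence has a limit there, and a local solution starting at that limit continues
it past `b`. -/
theorem mem_of_maximal {E : Type*} [NormedAddCommGroup E] [NormedSpace ℝ E] [CompleteSpace E]
    {F : E → E} (hF : ContDiff ℝ 1 F) {x : ℝ → E} {s : Set ℝ} (hopen : IsOpen s)
    (hconn : s.OrdConnected) {t₀ : ℝ} (ht₀ : t₀ ∈ s) {K : Set E} (hK : IsCompact K)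
    (hxK : ∀ t ∈ s, t₀ ≤ t → x t ∈ K)
    (hsol : ∀ t ∈ s, HasDerivAt x (F (x t)) t)
    (hmax : ∀ (y : ℝ → E) (s' : Set ℝ), IsOpen s' → s'.OrdConnected → s ⊆ s' →
      (∀ t ∈ s', HasDerivAt y (F (y t)) t) → Set.EqOn x y s → s' = s) :
    ∀ t, t₀ ≤ t → t ∈ s := by
  intro T hT
  by_contra hTs
  have hub : ∀ r ∈ s, r ≤ T := by
    intro r hr
    by_contra! h
    exact hTs (hconn.out ht₀ hr ⟨hT, h.le⟩)
  have hbdd : BddAbove s := ⟨T, hub⟩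
  set b := sSup s with hb
  have hlub : IsLUB s b := isLUB_csSup ⟨t₀, ht₀⟩ hbdd
  have hbs : b ∉ s := by
    intro h
    obtain ⟨ε, hε, hball⟩ := Metric.isOpen_iff.1 hopen b h
    have : b + ε / 2 ∈ s := hball (by
      rw [Metric.mem_ball, Real.dist_eq]
      rw [show b + ε / 2 - b = ε / 2 by ring, abs_of_pos (by positivity)]
      linarith)
    linarith [hlub.1 this]
  have hlt : ∀ r ∈ s, r < b := fun r hr =>
    lt_of_le_of_ne (hlub.1 hr) (fun h => hbs (h ▸ hr))
  have hsub : Set.Ico t₀ b ⊆ s := by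
    intro r hr
    obtain ⟨r', hr', h⟩ := (lt_isLUB_iff hlub).1 hr.2
    exact hconn.out ht₀ hr' ⟨hr.1, h.le⟩
  have ht₀b := hlt t₀ ht₀
  obtain ⟨B, hB⟩ := (hK.image hF.continuous).isBounded.exists_norm_le
  have hlip : ∀ r ∈ Set.Ico t₀ b, ∀ r' ∈ Set.Ico t₀ b, ‖x r' - x r‖ ≤ B * ‖r' - r‖ := by
    intro r hr r' hr'
    exact (convex_Ico t₀ b).norm_image_sub_le_of_norm_hasDerivWithin_le
      (fun u hu => (hsol u (hsub hu)).hasDerivWithinAt)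
      (fun u hu => hB _ ⟨x u, hxK u (hsub hu) hu.1, rfl⟩) hr hr'
  have hnear : Set.Ico t₀ b ∈ nhdsWithin b (Set.Iio b) := Ico_mem_nhdsLT ht₀b
  -- The Lipschitz bound makes `x` Cauchy at `b`, so it has a limit there.
  have hL : LipschitzOnWith B.toNNReal x (Set.Ico t₀ b) := by
    apply LipschitzOnWith.of_dist_le_mul
    intro r hr r' hr'
    rw [dist_eq_norm, dist_eq_norm]
    refine (hlip r' hr' r hr).trans ?_
    gcongr
    exact Real.le_coe_toNNReal B
  have hcau : Cauchy (map x (nhdsWithin b (Set.Iio b))) := by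
    have hc : Cauchy (nhdsWithin b (Set.Iio b)) := cauchy_nhds.mono inf_le_left
    exact hc.map_of_le hL.uniformContinuousOn (le_principal_iff.2 hnear)
  obtain ⟨p, hp⟩ := cauchy_map_iff_exists_tendsto.1 hcau
  obtain ⟨y, hyb, ε, hε, hy⟩ :=
    (hF.contDiffAt (x := p)).exists_forall_mem_closedBall_exists_eq_forall_mem_Ioo_hasDerivAt₀ b
  classical
  let z : ℝ → E := fun t => if t < b then x t else y t
  have hzx : ∀ t, t < b → z t = x t := fun t ht => if_pos ht
  have hzy : ∀ t, b ≤ t → z t = y t := fun t ht => if_neg (not_lt.2 ht)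
  have hzb : z b = p := by rw [hzy b le_rfl, hyb]
  have hzx' : ∀ t ∈ s, HasDerivAt z (F (z t)) t := by
    intro t ht
    rw [hzx t (hlt t ht)]
    apply (hsol t ht).congr_of_eventuallyEq
    filter_upwards [Iio_mem_nhds (hlt t ht)] with r hr using hzx r hr
  -- At `b` the one-sided derivatives agree: on the left by the limit of `x'`, on the right by `y`.
  have hleft : HasDerivWithinAt z (F p) (Set.Iic b) b := by
    apply hasDerivWithinAt_Iic_of_tendsto_deriv (s := Set.Ico t₀ b)
    · intro r hr
      exact (hzx' r (hsub hr)).differentiableAt.differentiableWithinAt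
    · rw [ContinuousWithinAt, hzb]
      have : Tendsto z (nhdsWithin b (Set.Iio b)) (nhds p) :=
        hp.congr' (by filter_upwards [self_mem_nhdsWithin] with r hr using (hzx r hr).symm)
      exact this.mono_left (nhdsWithin_mono _ fun r hr => hr.2)
    · exact hnear
    · have h1 : Tendsto (fun r => F (x r)) (nhdsWithin b (Set.Iio b)) (nhds (F p)) :=
        (hF.continuous.tendsto p).comp hp
      apply h1.congr'
      filter_upwards [hnear] with r hr
      rw [(hzx' r (hsub hr)).deriv, hzx r hr.2]
  have hright : HasDerivWithinAt z (F p) (Set.Ici b) b := by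
    have h1 : HasDerivWithinAt y (F p) (Set.Ici b) b := by
      have := hy b ⟨by linarith, by linarith⟩
      rw [hyb] at this
      exact this.hasDerivWithinAt
    exact h1.congr (fun r hr => hzy r hr) (hzy b le_rfl)
  have hmid : HasDerivAt z (F (z b)) b := by
    rw [hzb]
    have := hleft.union hright
    rwa [Set.Iic_union_Ici, hasDerivWithinAt_univ] at this
  -- The glued function solves the equation on a strictly larger interval.
  have hs' : s ∪ Set.Ioo t₀ (b + ε) = s := by
    apply hmax z
    · exact hopen.union isOpen_Ioo
    · refine (IsPreconnected.union' ?_ hconn.isPreconnected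
        isPreconnected_Ioo).ordConnected
      exact ⟨(t₀ + b) / 2, hsub ⟨by linarith, by linarith⟩, by linarith, by linarith⟩
    · exact Set.subset_union_left
    · intro t ht
      rcases lt_trichotomy t b with h | h | h
      · refine hzx' t ?_
        rcases ht with ht | ht
        · exact ht
        · exact hsub ⟨ht.1.le, h⟩
      · rw [h]; exact hmid
      · rcases ht with ht | ht
        · exact absurd (hlt t ht) (not_lt.2 h.le)
        rw [hzy t h.le]
        apply (hy t ⟨by linarith, ht.2⟩).congr_of_eventuallyEq
        filter_upwards [Ioi_mem_nhds h] with r hr using hzy r (le_of_lt hr)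
    · intro t ht
      exact (hzx t (hlt t ht)).symm
  exact hbs (hs' ▸ Or.inr ⟨ht₀b, by linarith⟩)

/-! ### The system in scalar form and invariance of the state space -/

/-- The matter density `Ω = 1 − Σ² − M²/12`. -/
noncomputable def Om (S M : ℝ) : ℝ := 1 - S ^ 2 - M ^ 2 / 12

/-- The deceleration parameter `q = 2Σ² + ((1+3w)/2) Ω`. -/
noncomputable def dec (w S M : ℝ) : ℝ := 2 * S ^ 2 + (1 + 3 * w) / 2 * Om S M

theorem dec_nonneg {w S M : ℝ} (hw : -(1 / 3) < w) (hO : 0 < Om S M) : 0 ≤ dec w S M := by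
  unfold dec
  have : 0 < (1 + 3 * w) / 2 := by linarith
  positivity

theorem dec_le_two {w S M : ℝ} (hw : w < 1) (hO : 0 < Om S M) : dec w S M ≤ 2 := by
  have h1 : (1 + 3 * w) / 2 * Om S M ≤ 2 * Om S M := by nlinarith
  have h2 : Om S M ≤ 1 - S ^ 2 := by unfold Om; nlinarith [sq_nonneg M]
  unfold dec
  linarith

/-- `(H, S, M)` solves the system on `s` and stays in `X_VIII`, the latter written as `H > 1`, `M > 0`,
`Ω > 0`; here `S` stands for `Σ`, and `1 − H²` is written as `−(H² − 1)`. -/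
structure IsSol (w : ℝ) (s : Set ℝ) (H S M : ℝ → ℝ) : Prop where
  dH : ∀ t ∈ s, HasDerivAt H ((H t ^ 2 - 1) * (dec w (S t) (M t) - H t * S t)) t
  dS : ∀ t ∈ s, HasDerivAt S (-(2 - dec w (S t) (M t)) * H t * S t
    + (H t ^ 2 - 1) * (1 - S t ^ 2) + M t ^ 2 / 3) t
  dM : ∀ t ∈ s, HasDerivAt M (M t * (dec w (S t) (M t) * H t - 4 * S t
    - (H t ^ 2 - 1) * S t)) t
  one_lt : ∀ t ∈ s, 1 < H t
  M_pos : ∀ t ∈ s, 0 < M t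
  Om_pos : ∀ t ∈ s, 0 < Om (S t) (M t)

theorem mem_XVIII_iff (p : ℝ × ℝ × ℝ) :
    p ∈ XVIII ↔ 1 < p.1 ∧ 0 < p.2.2 ∧ 0 < Om p.2.1 p.2.2 := by
  unfold XVIII Om
  simp only [Set.mem_ofPred_eq]
  constructor
  · rintro ⟨h1, h2, h3, h4, h5⟩
    refine ⟨h1, h4, ?_⟩
    rw [Real.lt_sqrt h4.le] at h5
    linarith
  · rintro ⟨h1, h4, h5⟩
    have hS : p.2.1 ^ 2 < 1 := by nlinarith [sq_nonneg p.2.2]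
    have := abs_lt.1 ((sq_lt_one_iff_abs_lt_one _).1 hS)
    refine ⟨h1, this.1, this.2, h4, ?_⟩
    rw [Real.lt_sqrt h4.le]
    linarith

theorem hasDerivAt_Om {w t : ℝ} {H S M : ℝ → ℝ}
    (dS : HasDerivAt S (-(2 - dec w (S t) (M t)) * H t * S t
      + (H t ^ 2 - 1) * (1 - S t ^ 2) + M t ^ 2 / 3) t)
    (dM : HasDerivAt M (M t * (dec w (S t) (M t) * H t - 4 * S t
      - (H t ^ 2 - 1) * S t)) t) :
    HasDerivAt (fun t => Om (S t) (M t)) (Om (S t) (M t) *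
      ((2 * dec w (S t) (M t) - (1 + 3 * w)) * H t - 2 * (H t ^ 2 - 1) * S t)) t := by
  have h := ((dS.pow 2).const_sub 1).sub ((dM.pow 2).div_const 12)
  refine h.congr_deriv ?_
  simp only [dec, Om]
  push_cast
  ring

/-- `X_VIII` is invariant: `H − 1`, `M` and `Ω` all satisfy linear equations. -/
theorem IsSol.of_mem {w : ℝ} {s : Set ℝ} {H S M : ℝ → ℝ} (hopen : IsOpen s)
    (hconn : s.OrdConnected)
    (dH : ∀ t ∈ s, HasDerivAt H ((H t ^ 2 - 1) * (dec w (S t) (M t) - H t * S t)) t)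
    (dS : ∀ t ∈ s, HasDerivAt S (-(2 - dec w (S t) (M t)) * H t * S t
      + (H t ^ 2 - 1) * (1 - S t ^ 2) + M t ^ 2 / 3) t)
    (dM : ∀ t ∈ s, HasDerivAt M (M t * (dec w (S t) (M t) * H t - 4 * S t
      - (H t ^ 2 - 1) * S t)) t)
    {t₀ : ℝ} (ht₀ : t₀ ∈ s) (hH : 1 < H t₀) (hM : 0 < M t₀) (hO : 0 < Om (S t₀) (M t₀)) :
    IsSol w s H S M := by
  have cH : ContinuousOn H s := fun t ht => (dH t ht).continuousAt.continuousWithinAt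
  have cS : ContinuousOn S s := fun t ht => (dS t ht).continuousAt.continuousWithinAt
  have cM : ContinuousOn M s := fun t ht => (dM t ht).continuousAt.continuousWithinAt
  have cq : ContinuousOn (fun t => dec w (S t) (M t)) s := by
    unfold dec Om; fun_prop
  refine ⟨dH, dS, dM, ?_, ?_, ?_⟩
  · have := pos_of_linear (f := fun t => H t - 1)
      (g := fun t => (H t + 1) * (dec w (S t) (M t) - H t * S t)) hopen hconn
      (fun t ht => ((dH t ht).sub_const 1).congr_deriv (by ring)) (by fun_prop) ht₀ (by linarith)
    intro t ht
    linarith [this t ht]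
  · exact pos_of_linear hopen hconn dM (by fun_prop) ht₀ hM
  · exact pos_of_linear hopen hconn (fun t ht => hasDerivAt_Om (dS t ht) (dM t ht))
      (by fun_prop) ht₀ hO

namespace IsSol

variable {w : ℝ} {s : Set ℝ} {H S M : ℝ → ℝ}

theorem sq_bounds (h : IsSol w s H S M) {t : ℝ} (ht : t ∈ s) :
    S t ^ 2 < 1 ∧ M t ^ 2 < 12 * (1 - S t ^ 2) := by
  have := h.Om_pos t ht
  unfold Om at this
  constructor <;> nlinarith [sq_nonneg (M t)]

theorem abs_S_lt (h : IsSol w s H S M) {t : ℝ} (ht : t ∈ s) : -1 < S t ∧ S t < 1 :=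
  abs_lt.1 ((sq_lt_one_iff_abs_lt_one _).1 (h.sq_bounds ht).1)

/-- The evolution equation of the Hubble-normalized shear `v = Σ/H`. -/
theorem dv (h : IsSol w s H S M) {t : ℝ} (ht : t ∈ s) :
    HasDerivAt (fun t => S t / H t) ((H t ^ 2 - 1) / H t + M t ^ 2 / (3 * H t)
      - (2 - dec w (S t) (M t) / H t ^ 2) * S t) t := by
  have hH : H t ≠ 0 := by linarith [h.one_lt t ht]
  refine ((h.dS t ht).div (h.dH t ht) hH).congr_deriv ?_
  field_simp
  ring

/-- While `Σ ≤ 0`, the term `−(2−q)HΣ` of `Σ'` is nonnegative. -/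
theorem S_deriv_ge (hw : w ∈ Set.Ioo (-(1 / 3) : ℝ) 1) (h : IsSol w s H S M) {t : ℝ} (ht : t ∈ s)
    (hS : S t ≤ 0) : (H t ^ 2 - 1) * (1 - S t ^ 2) ≤ -(2 - dec w (S t) (M t)) * H t * S t
      + (H t ^ 2 - 1) * (1 - S t ^ 2) + M t ^ 2 / 3 := by
  have h1 : 0 ≤ (2 - dec w (S t) (M t)) * H t * (-S t) :=
    mul_nonneg (mul_nonneg (by linarith [dec_le_two hw.2 (h.Om_pos t ht)])
      (by linarith [h.one_lt t ht])) (by linarith)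
  nlinarith [sq_nonneg (M t)]

/-- The region `Σ ≥ 0` is forward invariant. -/
theorem S_nonneg (hw : w ∈ Set.Ioo (-(1 / 3) : ℝ) 1) (h : IsSol w s H S M) {t₁ t : ℝ}
    (hsub : Set.Icc t₁ t ⊆ s) (h1 : t₁ ≤ t) (hS : 0 ≤ S t₁) : 0 ≤ S t := by
  apply barrier h1 (fun r hr => h.dS r (hsub hr)) hS
  intro r hr hr0
  refine le_trans ?_ (h.S_deriv_ge hw (hsub hr) hr0.le)
  have := h.one_lt r (hsub hr)
  have := (h.sq_bounds (hsub hr)).1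
  exact mul_nonneg (by nlinarith) (by linarith)

/-! ### Bounds on `H` to the future -/

/-- While `Σ < 0`, the function `(1−Σ²) H⁻² e^{4Σ/H}` is nondecreasing, and it is at most `H⁻²`. -/
theorem H_bound_of_neg (hw : w ∈ Set.Ioo (-(1 / 3) : ℝ) 1) (h : IsSol w s H S M) {t₁ t : ℝ}
    (hsub : Set.Icc t₁ t ⊆ s) (h1 : t₁ ≤ t) (hS : ∀ r ∈ Set.Icc t₁ t, S r < 0) :
    (1 - S t₁ ^ 2) / H t₁ ^ 2 * Real.exp (4 * (S t₁ / H t₁)) ≤ 1 / H t ^ 2 := by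
  have hmono : (1 - S t₁ ^ 2) / H t₁ ^ 2 * Real.exp (4 * (S t₁ / H t₁)) ≤
      (1 - S t ^ 2) / H t ^ 2 * Real.exp (4 * (S t / H t)) := by
    apply le_of_deriv_nonneg (f := fun t => (1 - S t ^ 2) / H t ^ 2 * Real.exp (4 * (S t / H t)))
      (f' := fun t => Real.exp (4 * (S t / H t)) / H t ^ 2 *
        (-2 * S t * (-(2 - dec w (S t) (M t)) * H t * S t
          + (H t ^ 2 - 1) * (1 - S t ^ 2) + M t ^ 2 / 3)
        + (1 - S t ^ 2) * (4 * ((H t ^ 2 - 1) / H t + M t ^ 2 / (3 * H t)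
      - (2 - dec w (S t) (M t) / H t ^ 2) * S t)
          - 2 * ((H t ^ 2 - 1) * (dec w (S t) (M t) - H t * S t)) / H t))) h1
    · intro r hr
      have hH : H r ≠ 0 := by linarith [h.one_lt r (hsub hr)]
      have e := ((((h.dS r (hsub hr)).pow 2).const_sub 1).div ((h.dH r (hsub hr)).pow 2)
        (pow_ne_zero 2 hH)).mul (((h.dv (hsub hr)).const_mul 4).exp)
      refine e.congr_deriv ?_
      simp only [Pi.pow_apply, Pi.div_apply]
      field_simp
      ring
    · intro r hr
      have hrs := hsub (Set.Ioo_subset_Icc_self hr)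
      have hSr := hS r (Set.Ioo_subset_Icc_self hr)
      have hH := h.one_lt r hrs
      have hSS := (h.sq_bounds hrs).1
      have hq := dec_le_two hw.2 (h.Om_pos r hrs)
      have hq0 := dec_nonneg hw.1 (h.Om_pos r hrs)
      have hH0 : 0 < H r := by linarith
      have hd := h.S_deriv_ge hw hrs hSr.le
      apply mul_nonneg (by positivity)
      set q := dec w (S r) (M r)
      set d := -(2 - q) * H r * S r + (H r ^ 2 - 1) * (1 - S r ^ 2) + M r ^ 2 / 3
      have e1 : -2 * S r * ((H r ^ 2 - 1) * (1 - S r ^ 2)) ≤ -2 * S r * d :=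
        mul_le_mul_of_nonneg_left hd (by linarith)
      have e2 : (H r ^ 2 - 1) / H r ≤ (H r ^ 2 - 1) / H r + M r ^ 2 / (3 * H r)
          - (2 - q / H r ^ 2) * S r := by
        have a1 : 0 ≤ M r ^ 2 / (3 * H r) := by positivity
        have a2 : q / H r ^ 2 ≤ 2 := by
          rw [div_le_iff₀ (by positivity)]; nlinarith
        nlinarith
      have e3 : 2 * ((H r ^ 2 - 1) * (q - H r * S r)) / H r =
          2 * q * ((H r ^ 2 - 1) / H r) - 2 * (H r ^ 2 - 1) * S r := by
        field_simp
      rw [e3]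
      have e4 : 0 ≤ (H r ^ 2 - 1) / H r := div_nonneg (by nlinarith) hH0.le
      set V := (H r ^ 2 - 1) / H r
      have e5 : 0 ≤ (1 - S r ^ 2) * (4 * V - 2 * q * V) :=
        mul_nonneg (by linarith) (by nlinarith)
      nlinarith [mul_le_mul_of_nonneg_left e2 (by linarith : 0 ≤ 1 - S r ^ 2)]
  have hts : t ∈ s := hsub ⟨h1, le_rfl⟩
  have hH := h.one_lt t hts
  refine hmono.trans ?_
  have hv : Real.exp (4 * (S t / H t)) ≤ 1 := by
    rw [Real.exp_le_one_iff]
    have : S t / H t ≤ 0 := div_nonpos_of_nonpos_of_nonneg (hS t ⟨h1, le_rfl⟩).le (by linarith)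
    linarith
  have h2 : (1 - S t ^ 2) / H t ^ 2 ≤ 1 / H t ^ 2 := by
    gcongr
    nlinarith [sq_nonneg (S t)]
  calc _ ≤ (1 - S t ^ 2) / H t ^ 2 * 1 := by
        gcongr
        exact div_nonneg (by linarith [(h.sq_bounds hts).1]) (by positivity)
    _ ≤ _ := by rwa [mul_one]

/-- When `Σ ≥ 0`, the function `H⁻² e^{4Σ/H}` is nondecreasing whenever it is below `1/5`, since this
forces `H² > 5`; and `Σ/H ≤ 1`. -/
theorem H_bound_of_nonneg (hw : w ∈ Set.Ioo (-(1 / 3) : ℝ) 1) (h : IsSol w s H S M) {t₁ t : ℝ}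
    (hsub : Set.Icc t₁ t ⊆ s) (h1 : t₁ ≤ t) (hS : 0 ≤ S t₁) :
    min (1 / H t₁ ^ 2) (1 / 5) ≤ 1 / H t ^ 2 * Real.exp 4 := by
  have hSn : ∀ r ∈ Set.Icc t₁ t, 0 ≤ S r := fun r hr =>
    h.S_nonneg hw ((Set.Icc_subset_Icc_right hr.2).trans hsub) hr.1 hS
  have hexp : ∀ r ∈ Set.Icc t₁ t, 1 ≤ Real.exp (4 * (S r / H r)) := fun r hr => by
    rw [Real.one_le_exp_iff]
    have := h.one_lt r (hsub hr)
    have := div_nonneg (hSn r hr) (by linarith : 0 ≤ H r)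
    linarith
  have hmono : min (1 / H t₁ ^ 2) (1 / 5) ≤ 1 / H t ^ 2 * Real.exp (4 * (S t / H t)) := by
    apply barrier (f := fun t => 1 / H t ^ 2 * Real.exp (4 * (S t / H t)))
      (f' := fun t => Real.exp (4 * (S t / H t)) / H t ^ 2 *
        (4 * ((H t ^ 2 - 1) / H t + M t ^ 2 / (3 * H t)
      - (2 - dec w (S t) (M t) / H t ^ 2) * S t)
          - 2 * ((H t ^ 2 - 1) * (dec w (S t) (M t) - H t * S t)) / H t)) h1
    · intro r hr
      have hH : H r ≠ 0 := by linarith [h.one_lt r (hsub hr)]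
      have e := ((hasDerivAt_const r (1:ℝ)).div ((h.dH r (hsub hr)).pow 2)
        (pow_ne_zero 2 hH)).mul (((h.dv (hsub hr)).const_mul 4).exp)
      refine e.congr_deriv ?_
      simp only [Pi.pow_apply, Pi.div_apply]
      field_simp
      ring
    · refine (min_le_left _ _).trans ?_
      have := h.one_lt t₁ (hsub ⟨le_rfl, h1⟩)
      exact le_mul_of_one_le_right (by positivity) (hexp t₁ ⟨le_rfl, h1⟩)
    · intro r hr hlt
      have hrs := hsub hr
      have hSr := hSn r hr
      have hH := h.one_lt r hrs
      have hq := dec_le_two hw.2 (h.Om_pos r hrs)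
      have hq0 := dec_nonneg hw.1 (h.Om_pos r hrs)
      have hH0 : 0 < H r := by linarith
      have h5 : 1 / H r ^ 2 < 1 / 5 :=
        lt_of_le_of_lt (le_mul_of_one_le_right (by positivity) (hexp r hr))
          (hlt.trans_le (min_le_right _ _))
      rw [one_div_lt_one_div (by positivity) (by norm_num)] at h5
      apply mul_nonneg (by positivity)
      set q := dec w (S r) (M r)
      have e2 : (H r ^ 2 - 1) / H r - 2 * S r ≤ (H r ^ 2 - 1) / H r + M r ^ 2 / (3 * H r)
          - (2 - q / H r ^ 2) * S r := by
        have a1 : 0 ≤ M r ^ 2 / (3 * H r) := by positivity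
        have a2 : 0 ≤ q / H r ^ 2 := by positivity
        nlinarith
      have e3 : 2 * ((H r ^ 2 - 1) * (q - H r * S r)) / H r =
          2 * q * ((H r ^ 2 - 1) / H r) - 2 * (H r ^ 2 - 1) * S r := by
        field_simp
      rw [e3]
      have e4 : 0 ≤ (H r ^ 2 - 1) / H r := div_nonneg (by nlinarith) hH0.le
      set V := (H r ^ 2 - 1) / H r
      nlinarith
  refine hmono.trans ?_
  have hts : t ∈ s := hsub ⟨h1, le_rfl⟩
  have hH := h.one_lt t hts
  gcongr
  have : S t / H t ≤ 1 := by
    rw [div_le_one (by linarith)]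
    linarith [(h.abs_S_lt hts).2]
  linarith

/-- `H` stays bounded to the future. -/
theorem H_bdd_forward (hw : w ∈ Set.Ioo (-(1 / 3) : ℝ) 1) (h : IsSol w s H S M)
    (hconn : s.OrdConnected) {t₀ : ℝ} (ht₀ : t₀ ∈ s) :
    ∃ C, ∀ t ∈ s, t₀ ≤ t → H t ≤ C := by
  have key : ∀ {c x : ℝ}, 0 < c → 1 < x → c ≤ 1 / x ^ 2 → x ≤ 1 / c := by
    intro c x hc hx hcx
    have : x ^ 2 ≤ 1 / c := (le_one_div hc (by positivity)).1 hcx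
    nlinarith
  by_cases hex : ∃ t₁ ∈ s, t₀ ≤ t₁ ∧ 0 ≤ S t₁
  · obtain ⟨t₁, ht₁, h01, hS⟩ := hex
    have hsub : Set.Icc t₀ t₁ ⊆ s := hconn.out ht₀ ht₁
    obtain ⟨C, hC⟩ := (isCompact_Icc (a := t₀) (b := t₁)).bddAbove_image
      (f := H) (fun t ht => (h.dH t (hsub ht)).continuousAt.continuousWithinAt)
    have hc : 0 < min (1 / H t₁ ^ 2) (1 / 5) / Real.exp 4 := by
      have := h.one_lt t₁ ht₁
      have : 0 < min (1 / H t₁ ^ 2) (1 / 5) := lt_min (by positivity) (by norm_num)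
      positivity
    refine ⟨max C (1 / (min (1 / H t₁ ^ 2) (1 / 5) / Real.exp 4)), fun t ht h0t => ?_⟩
    rcases le_total t t₁ with hle | hle
    · exact (hC ⟨t, ⟨h0t, hle⟩, rfl⟩).trans (le_max_left _ _)
    · refine le_trans ?_ (le_max_right _ _)
      apply key hc (h.one_lt t ht)
      rw [div_le_iff₀ (Real.exp_pos _)]
      exact h.H_bound_of_nonneg hw (hconn.out ht₁ ht) hle hS
  · push Not at hex
    have hc : 0 < (1 - S t₀ ^ 2) / H t₀ ^ 2 * Real.exp (4 * (S t₀ / H t₀)) := by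
      have h1 := h.one_lt t₀ ht₀
      have h2 : 0 < 1 - S t₀ ^ 2 := by linarith [(h.sq_bounds ht₀).1]
      positivity
    refine ⟨_, fun t ht h0t => key hc (h.one_lt t ht) ?_⟩
    have hsub : Set.Icc t₀ t ⊆ s := hconn.out ht₀ ht
    exact h.H_bound_of_neg hw hsub h0t (fun r hr => hex r (hsub hr) hr.1)

/-! ### Behaviour to the past -/

/-- Past growth of `Y = Ω³M²/(H²−1)⁴`: from `Y' = −3(1+3w) H Y` and `H > 1` the function
`Y e^{3(1+3w)t}` is nonincreasing, and `Ω³M² ≤ 12`. -/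
theorem backward_bound (h : IsSol w s H S M) (hw : w ∈ Set.Ioo (-(1 / 3) : ℝ) 1) {t t₀ : ℝ}
    (hsub : Set.Icc t t₀ ⊆ s) (h1 : t ≤ t₀) :
    (H t ^ 2 - 1) ^ 4 * (Om (S t₀) (M t₀) ^ 3 * M t₀ ^ 2 / (H t₀ ^ 2 - 1) ^ 4 *
      Real.exp (3 * (1 + 3 * w) * (t₀ - t))) ≤ 12 := by
  have hH2 : ∀ r ∈ Set.Icc t t₀, 0 < H r ^ 2 - 1 := fun r hr => by
    nlinarith [h.one_lt r (hsub hr)]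
  have hmono : -(Om (S t) (M t) ^ 3 * M t ^ 2 / (H t ^ 2 - 1) ^ 4 *
      Real.exp (3 * (1 + 3 * w) * t)) ≤ -(Om (S t₀) (M t₀) ^ 3 * M t₀ ^ 2 / (H t₀ ^ 2 - 1) ^ 4 *
      Real.exp (3 * (1 + 3 * w) * t₀)) := by
    apply le_of_deriv_nonneg (f := fun t => -(Om (S t) (M t) ^ 3 * M t ^ 2 / (H t ^ 2 - 1) ^ 4 *
      Real.exp (3 * (1 + 3 * w) * t)))
      (f' := fun t => Om (S t) (M t) ^ 3 * M t ^ 2 / (H t ^ 2 - 1) ^ 4 *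
      Real.exp (3 * (1 + 3 * w) * t) * (3 * (1 + 3 * w) * (H t - 1))) h1
    · intro r hr
      have hrs := hsub hr
      have hne : H r ^ 2 - 1 ≠ 0 := (hH2 r hr).ne'
      have e := ((((hasDerivAt_Om (h.dS r hrs) (h.dM r hrs)).pow 3).mul
        ((h.dM r hrs).pow 2)).div ((((h.dH r hrs).pow 2).sub_const 1).pow 4)
          (pow_ne_zero 4 hne)).mul (((hasDerivAt_id r).const_mul (3 * (1 + 3 * w))).exp)
      refine e.neg.congr_deriv ?_
      simp only [Pi.pow_apply, Pi.mul_apply, Pi.div_apply, id]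
      set q := dec w (S r) (M r)
      set O := Om (S r) (M r)
      field_simp
      ring
    · intro r hr
      have hr' := Set.Ioo_subset_Icc_self hr
      have := hH2 r hr'
      have := h.Om_pos r (hsub hr')
      have := h.one_lt r (hsub hr')
      have h4 : 0 ≤ 3 * (1 + 3 * w) * (H r - 1) :=
        mul_nonneg (by linarith [hw.1]) (by linarith)
      positivity
  have ht : t ∈ Set.Icc t t₀ := ⟨le_rfl, h1⟩
  have hO := h.Om_pos t (hsub ht)
  have hO1 : Om (S t) (M t) ≤ 1 := by
    unfold Om; nlinarith [sq_nonneg (S t), sq_nonneg (M t)]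
  have hM : M t ^ 2 ≤ 12 := by
    nlinarith [(h.sq_bounds (hsub ht)).2, sq_nonneg (S t)]
  have h12 : Om (S t) (M t) ^ 3 * M t ^ 2 ≤ 1 * 12 :=
    mul_le_mul (pow_le_one₀ hO.le hO1) hM (sq_nonneg _) zero_le_one
  have hX : 0 < (H t ^ 2 - 1) ^ 4 := pow_pos (hH2 t ht) 4
  set Y := Om (S t₀) (M t₀) ^ 3 * M t₀ ^ 2 / (H t₀ ^ 2 - 1) ^ 4
  have h3 : Y * Real.exp (3 * (1 + 3 * w) * t₀) ≤
      Om (S t) (M t) ^ 3 * M t ^ 2 / (H t ^ 2 - 1) ^ 4 * Real.exp (3 * (1 + 3 * w) * t) := by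
    linarith
  have h4 : Y * Real.exp (3 * (1 + 3 * w) * (t₀ - t)) ≤
      Om (S t) (M t) ^ 3 * M t ^ 2 / (H t ^ 2 - 1) ^ 4 := by
    rw [mul_sub, Real.exp_sub, ← mul_div_assoc, div_le_iff₀ (Real.exp_pos _)]
    exact h3
  calc _ ≤ (H t ^ 2 - 1) ^ 4 * (Om (S t) (M t) ^ 3 * M t ^ 2 / (H t ^ 2 - 1) ^ 4) := by gcongr
    _ = Om (S t) (M t) ^ 3 * M t ^ 2 := mul_div_cancel₀ _ hX.ne'
    _ ≤ 12 := by linarith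

theorem Y_pos (h : IsSol w s H S M) {t : ℝ} (ht : t ∈ s) :
    0 < Om (S t) (M t) ^ 3 * M t ^ 2 / (H t ^ 2 - 1) ^ 4 := by
  have h1 := h.Om_pos t ht
  have h2 := h.M_pos t ht
  have h3 : 0 < H t ^ 2 - 1 := by nlinarith [h.one_lt t ht]
  positivity

/-- `H` stays bounded to the past. -/
theorem H_bdd_backward (hw : w ∈ Set.Ioo (-(1 / 3) : ℝ) 1) (h : IsSol w s H S M)
    (hconn : s.OrdConnected) {t₀ : ℝ} (ht₀ : t₀ ∈ s) :
    ∃ C, ∀ t ∈ s, t ≤ t₀ → H t ≤ C := by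
  have hY := h.Y_pos ht₀
  set Y := Om (S t₀) (M t₀) ^ 3 * M t₀ ^ 2 / (H t₀ ^ 2 - 1) ^ 4 with hYdef
  refine ⟨2 + 12 / Y, fun t ht h1 => ?_⟩
  have hb := h.backward_bound hw (hconn.out ht ht₀) h1
  rw [← hYdef] at hb
  have hexp : 1 ≤ Real.exp (3 * (1 + 3 * w) * (t₀ - t)) := by
    rw [Real.one_le_exp_iff]
    exact mul_nonneg (by linarith [hw.1]) (by linarith)
  have hH := h.one_lt t ht
  by_contra! hc
  have h12 : 0 < 12 / Y := by positivity
  have h3 : 12 / Y < (H t ^ 2 - 1) ^ 4 := by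
    have a : 12 / Y < H t ^ 2 - 1 := by nlinarith
    have b : 1 ≤ H t ^ 2 - 1 := by nlinarith
    exact a.trans_le (le_self_pow₀ b (by norm_num))
  rw [div_lt_iff₀ hY] at h3
  have h4 : (H t ^ 2 - 1) ^ 4 * Y ≤ (H t ^ 2 - 1) ^ 4 *
      (Y * Real.exp (3 * (1 + 3 * w) * (t₀ - t))) := by
    gcongr
    exact le_mul_of_one_le_right hY.le hexp
  linarith

/-- Along times tending to `−∞`, every limit of `H` equals `1`. -/
theorem alpha (hw : w ∈ Set.Ioo (-(1 / 3) : ℝ) 1) (h : IsSol w Set.univ H S M)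
    {u : ℕ → ℝ} (hu : Tendsto u atTop atBot) {p : ℝ}
    (hp : Tendsto (fun n => H (u n)) atTop (nhds p)) : p = 1 := by
  have hY := h.Y_pos (Set.mem_univ 0)
  set Y := Om (S 0) (M 0) ^ 3 * M 0 ^ 2 / (H 0 ^ 2 - 1) ^ 4 with hYdef
  have hk : 0 < 3 * (1 + 3 * w) := by linarith [hw.1]
  have hT : Tendsto (fun n => Y * Real.exp (3 * (1 + 3 * w) * (0 - u n))) atTop atTop := by
    apply Tendsto.const_mul_atTop hY
    apply Real.tendsto_exp_atTop.comp
    apply Tendsto.const_mul_atTop hk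
    simp only [zero_sub]
    exact tendsto_neg_atBot_atTop.comp hu
  have h0 : Tendsto (fun n => 12 / (Y * Real.exp (3 * (1 + 3 * w) * (0 - u n)))) atTop (nhds 0) :=
    hT.const_div_atTop 12
  have h1 : Tendsto (fun n => (H (u n) ^ 2 - 1) ^ 4) atTop (nhds 0) := by
    apply squeeze_zero' (Eventually.of_forall fun n => by positivity) _ h0
    filter_upwards [hu.eventually (eventually_le_atBot 0)] with n hn
    rw [le_div_iff₀ (by positivity)]
    exact h.backward_bound hw (Set.subset_univ _) hn
  have h2 : Tendsto (fun n => (H (u n) ^ 2 - 1) ^ 4) atTop (nhds ((p ^ 2 - 1) ^ 4)) :=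
    ((hp.pow 2).sub_const 1).pow 4
  have h3 : p ^ 2 - 1 = 0 := by
    have := tendsto_nhds_unique h2 h1
    exact (pow_eq_zero_iff (by norm_num)).1 this
  have h4 : 1 ≤ p := ge_of_tendsto' hp fun n => (h.one_lt _ (Set.mem_univ _)).le
  nlinarith

/-! ### Future limit points -/

/-- If `Σ` were always negative, both `H` and `Σ` would increase, so `Σ'` would be bounded below by
a positive constant, contradicting `|Σ| < 1`. -/
theorem exists_S_nonneg (hw : w ∈ Set.Ioo (-(1 / 3) : ℝ) 1) (h : IsSol w Set.univ H S M) :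
    ∃ t₁, 0 ≤ S t₁ := by
  by_contra! hneg
  have hu : ∀ t : ℝ, t ∈ Set.univ := Set.mem_univ
  have hHm : ∀ t, 0 ≤ t → H 0 ≤ H t := fun t ht => by
    apply le_of_deriv_nonneg ht (fun r _ => h.dH r (hu r))
    intro r _
    have h1 := h.one_lt r (hu r)
    have h2 := dec_nonneg hw.1 (h.Om_pos r (hu r))
    exact mul_nonneg (by nlinarith) (by nlinarith [hneg r])
  have h0 := h.one_lt 0 (hu 0)
  have hSm : ∀ t, 0 ≤ t → S 0 ≤ S t := fun t ht => by
    apply le_of_deriv_nonneg ht (fun r _ => h.dS r (hu r))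
    intro r _
    refine le_trans ?_ (h.S_deriv_ge hw (hu r) (hneg r).le)
    have h1 := h.one_lt r (hu r)
    exact mul_nonneg (by nlinarith) (by linarith [(h.sq_bounds (hu r)).1])
  set c := (H 0 ^ 2 - 1) * (1 - S 0 ^ 2) with hc
  have hcpos : 0 < c := mul_pos (by nlinarith) (by linarith [(h.sq_bounds (hu 0)).1])
  have hlin : ∀ t, 0 ≤ t → S 0 - c * 0 ≤ S t - c * t := fun t ht => by
    apply le_of_deriv_nonneg (f := fun t => S t - c * t) ht
      (fun r _ => (h.dS r (hu r)).sub ((hasDerivAt_id r).const_mul c))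
    intro r hr
    have h1 := h.S_deriv_ge hw (hu r) (hneg r).le
    have h2 : c ≤ (H r ^ 2 - 1) * (1 - S r ^ 2) := by
      have a := hHm r hr.1.le
      have b := hSm r hr.1.le
      have b' := hneg r
      apply mul_le_mul (by nlinarith) (by nlinarith)
      · linarith [(h.sq_bounds (hu 0)).1]
      · nlinarith
    linarith
  have := hlin (1 / c) (by positivity)
  have e : c * (1 / c) = 1 := by field_simp
  linarith [hneg (1 / c), (h.abs_S_lt (hu 0)).1]

/-- The derivative of `L = log (M²/(H²−1)) − 3Σ/H`. -/
theorem dL (h : IsSol w s H S M) {t : ℝ} (ht : t ∈ s) :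
    HasDerivAt (fun t => 2 * Real.log (M t) - Real.log (H t ^ 2 - 1) - 3 * (S t / H t))
      (-6 * S t - 3 * ((H t ^ 2 - 1) / H t + M t ^ 2 / (3 * H t)
      - (2 - dec w (S t) (M t) / H t ^ 2) * S t)) t := by
  have hH := h.one_lt t ht
  have h1 : H t ^ 2 - 1 ≠ 0 := by nlinarith
  have h2 := (h.M_pos t ht).ne'
  refine (((((h.dM t ht).log h2).const_mul 2).sub
    ((((h.dH t ht).pow 2).sub_const 1).log h1)).sub ((h.dv ht).const_mul 3)).congr_deriv ?_
  simp only [Pi.pow_apply]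
  have e1 : ∀ X : ℝ, M t * X / M t = X := fun X => by field_simp
  have e2 : ((2 : ℕ) : ℝ) * H t ^ (2 - 1) * ((H t ^ 2 - 1) * (dec w (S t) (M t) - H t * S t)) /
      (H t ^ 2 - 1) = 2 * H t * (dec w (S t) (M t) - H t * S t) := by
    field_simp
    norm_num
    ring
  rw [e1, e2]
  ring

/-- When `Σ ≥ 0`, the shear terms of `L'` cancel and leave `L' ≤ −3(H²−1)/H`. -/
theorem dL_le (hw : w ∈ Set.Ioo (-(1 / 3) : ℝ) 1) (h : IsSol w s H S M) {t : ℝ} (ht : t ∈ s)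
    (hS : 0 ≤ S t) : -6 * S t - 3 * ((H t ^ 2 - 1) / H t + M t ^ 2 / (3 * H t)
      - (2 - dec w (S t) (M t) / H t ^ 2) * S t) ≤ -3 * ((H t ^ 2 - 1) / H t) := by
  have hH := h.one_lt t ht
  have hq := dec_nonneg hw.1 (h.Om_pos t ht)
  have h1 : 0 ≤ M t ^ 2 / (3 * H t) := by positivity
  have h2 : 0 ≤ dec w (S t) (M t) / H t ^ 2 * S t := by positivity
  linarith

/-- `D = (H²−1)⁴/(H⁶M²)` is nondecreasing, because `D'/D = 6q/H`. -/
theorem D_mono (hw : w ∈ Set.Ioo (-(1 / 3) : ℝ) 1) (h : IsSol w s H S M) {t₁ t : ℝ}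
    (hsub : Set.Icc t₁ t ⊆ s) (h1 : t₁ ≤ t) :
    (H t₁ ^ 2 - 1) ^ 4 / (H t₁ ^ 6 * M t₁ ^ 2) ≤ (H t ^ 2 - 1) ^ 4 / (H t ^ 6 * M t ^ 2) := by
  apply le_of_deriv_nonneg (f := fun t => (H t ^ 2 - 1) ^ 4 / (H t ^ 6 * M t ^ 2))
    (f' := fun t => (H t ^ 2 - 1) ^ 4 / (H t ^ 6 * M t ^ 2) * (6 * dec w (S t) (M t) / H t)) h1
  · intro r hr
    have hrs := hsub hr
    have hH : H r ≠ 0 := by linarith [h.one_lt r hrs]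
    have hM := (h.M_pos r hrs).ne'
    refine (((((h.dH r hrs).pow 2).sub_const 1).pow 4).div
      (((h.dH r hrs).pow 6).mul ((h.dM r hrs).pow 2))
      (mul_ne_zero (pow_ne_zero 6 hH) (pow_ne_zero 2 hM))).congr_deriv ?_
    simp only [Pi.pow_apply, Pi.mul_apply]
    field_simp
    ring
  · intro r hr
    have hrs := hsub (Set.Ioo_subset_Icc_self hr)
    have hH := h.one_lt r hrs
    have hq := dec_nonneg hw.1 (h.Om_pos r hrs)
    positivity

/-- Along times tending to `+∞`, every limit of `M` is zero. -/
theorem omega (hw : w ∈ Set.Ioo (-(1 / 3) : ℝ) 1) (h : IsSol w Set.univ H S M)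
    {u : ℕ → ℝ} (hu : Tendsto u atTop atTop) {p : ℝ}
    (hp : Tendsto (fun n => M (u n)) atTop (nhds p)) : p = 0 := by
  by_contra hp0
  have hm : ∀ t : ℝ, t ∈ Set.univ := Set.mem_univ
  have hp1 : 0 < p := lt_of_le_of_ne
    (ge_of_tendsto' hp fun n => (h.M_pos _ (hm _)).le) (Ne.symm hp0)
  obtain ⟨t₁, ht₁⟩ := h.exists_S_nonneg hw
  have hS : ∀ t, t₁ ≤ t → 0 ≤ S t := fun t ht => h.S_nonneg hw (Set.subset_univ _) ht ht₁
  obtain ⟨C, hC⟩ := h.H_bdd_forward hw Set.ordConnected_univ (hm t₁)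
  have hC1 : 1 < C := (h.one_lt t₁ (hm _)).trans_le (hC t₁ (hm _) le_rfl)
  have hV : ∀ t, 0 < H t ^ 2 - 1 := fun t => by nlinarith [h.one_lt t (hm t)]
  set L : ℝ → ℝ := fun t => 2 * Real.log (M t) - Real.log (H t ^ 2 - 1) - 3 * (S t / H t)
    with hL
  have hLanti : ∀ a b, t₁ ≤ a → a ≤ b → L b ≤ L a := fun a b ha hab => by
    have := le_of_deriv_nonneg (f := fun t => -L t) hab (fun r _ => (h.dL (hm r)).neg) (by
      intro r hr
      have h1 := h.dL_le hw (hm r) (hS r (ha.trans hr.1.le))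
      have h2 : 0 ≤ (H r ^ 2 - 1) / H r :=
        div_nonneg (hV r).le (by linarith [h.one_lt r (hm r)])
      linarith)
    linarith
  -- A lower bound for `L` at those `u n` with `M ≥ p / 2`, using `H ≤ C` and `Σ/H ≤ 1`.
  set L₁ := 2 * Real.log (p / 2) - Real.log (C ^ 2 - 1) - 3 with hL₁
  have hLlow : ∀ t, t₁ ≤ t → L₁ ≤ L t := fun t ht => by
    obtain ⟨n, hn1, hn2⟩ := ((hp.eventually (lt_mem_nhds (half_lt_self hp1))).and
      (hu.eventually (eventually_ge_atTop t))).exists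
    refine le_trans ?_ (hLanti t (u n) ht hn2)
    have hun := ht.trans hn2
    have a1 : Real.log (p / 2) ≤ Real.log (M (u n)) := Real.log_le_log (by positivity) hn1.le
    have a2 : Real.log (H (u n) ^ 2 - 1) ≤ Real.log (C ^ 2 - 1) := by
      apply Real.log_le_log (hV _)
      nlinarith [hC (u n) (hm _) hun, h.one_lt (u n) (hm _)]
    have a3 : S (u n) / H (u n) ≤ 1 := by
      rw [div_le_one (by linarith [h.one_lt (u n) (hm _)])]
      linarith [h.one_lt (u n) (hm _), (h.abs_S_lt (hm (u n))).2]
    simp only [hL, hL₁]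
    linarith
  have hMlow : ∀ t, t₁ ≤ t → Real.exp L₁ * (H t ^ 2 - 1) ≤ M t ^ 2 := fun t ht => by
    have hM := h.M_pos t (hm t)
    have a1 : 0 ≤ S t / H t := div_nonneg (hS t ht) (by linarith [h.one_lt t (hm t)])
    have a2 := hLlow t ht
    simp only [hL] at a2
    have a3 : L₁ + Real.log (H t ^ 2 - 1) ≤ Real.log (M t ^ 2) := by
      rw [Real.log_pow]; push_cast; linarith
    calc _ = Real.exp (L₁ + Real.log (H t ^ 2 - 1)) := by
          rw [Real.exp_add, Real.exp_log (hV t)]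
      _ ≤ Real.exp (Real.log (M t ^ 2)) := Real.exp_le_exp.2 a3
      _ = M t ^ 2 := Real.exp_log (by positivity)
  set d := (H t₁ ^ 2 - 1) ^ 4 / (H t₁ ^ 6 * M t₁ ^ 2) with hd
  have hdpos : 0 < d := by
    have := hV t₁
    have := h.one_lt t₁ (hm _)
    have := h.M_pos t₁ (hm _)
    positivity
  set k := d * Real.exp L₁ with hk
  have hkpos : 0 < k := by positivity
  have hVlow : ∀ t, t₁ ≤ t → min 1 k ≤ H t ^ 2 - 1 := fun t ht => by
    have hM := h.M_pos t (hm t)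
    have hH := h.one_lt t (hm t)
    have a1 := h.D_mono hw (Set.subset_univ _) ht
    rw [← hd, le_div_iff₀ (by positivity)] at a1
    have a2 := hMlow t ht
    have hX := hV t
    have a3 : k * (H t ^ 2 - 1) ≤ (H t ^ 2 - 1) ^ 3 * (H t ^ 2 - 1) := by
      calc k * (H t ^ 2 - 1) = d * (1 * (Real.exp L₁ * (H t ^ 2 - 1))) := by rw [hk]; ring
        _ ≤ d * (H t ^ 6 * M t ^ 2) := by
          gcongr
          exact one_le_pow₀ hH.le
        _ ≤ _ := by linarith
    have a4 : k ≤ (H t ^ 2 - 1) ^ 3 := le_of_mul_le_mul_right a3 hX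
    by_contra! hlt
    have b1 : H t ^ 2 - 1 < 1 := hlt.trans_le (min_le_left _ _)
    have b2 : H t ^ 2 - 1 < k := hlt.trans_le (min_le_right _ _)
    have b3 : (H t ^ 2 - 1) ^ 3 ≤ H t ^ 2 - 1 := pow_le_of_le_one hX.le b1.le (by norm_num)
    linarith
  set m := min 1 k / C with hmdef
  have hmpos : 0 < m := by
    have : 0 < min 1 k := lt_min one_pos hkpos
    positivity
  have hlin : ∀ t, t₁ ≤ t → L t + 3 * m * t ≤ L t₁ + 3 * m * t₁ := fun t ht => by
    have := le_of_deriv_nonneg (f := fun t => -(L t + 3 * m * t)) ht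
      (fun r _ => ((h.dL (hm r)).add ((hasDerivAt_id r).const_mul (3 * m))).neg) (by
      intro r hr
      have h1 := h.dL_le hw (hm r) (hS r hr.1.le)
      have h2 : m ≤ (H r ^ 2 - 1) / H r :=
        div_le_div₀ (hV r).le (hVlow r hr.1.le) (by linarith [h.one_lt r (hm r)])
          (hC r (hm r) hr.1.le)
      linarith)
    linarith
  have hgap : 0 ≤ L t₁ - L₁ := by linarith [hLlow t₁ le_rfl]
  -- By this time the linear decay has brought `L` down to `L₁ − 1`.
  have ht₂ : t₁ ≤ t₁ + (L t₁ - L₁ + 1) / (3 * m) := by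
    have : 0 ≤ (L t₁ - L₁ + 1) / (3 * m) := by positivity
    linarith
  have e1 := hlin _ ht₂
  have e2 := hLlow _ ht₂
  have e3 : 3 * m * ((L t₁ - L₁ + 1) / (3 * m)) = L t₁ - L₁ + 1 := by field_simp
  rw [mul_add, e3] at e1
  linarith

end IsSol

/-! ### Conclusion -/

theorem contDiff_Fpf (w : ℝ) : ContDiff ℝ 1 (Fpf w) := by
  unfold Fpf
  fun_prop

/-- Every maximal solution of the perfect-fluid LRS Bianchi type VIII system with initial
condition in `X_VIII` is defined for all `t ∈ ℝ`, remains in `X_VIII`, has image contained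
in a compact set; every ω-limit point satisfies `M = 0` and every α-limit point satisfies
`H = 1`.  Here a maximal solution is a solution on an open order-connected set (interval)
`s` containing the initial time which admits no extension to a strictly larger such set. -/
theorem perfect_fluid_global_limit_sets (w : ℝ) (hw : w ∈ Set.Ioo (-(1 / 3) : ℝ) 1)
    (x : ℝ → ℝ × ℝ × ℝ) (s : Set ℝ) (hopen : IsOpen s) (hconn : s.OrdConnected)
    (t₀ : ℝ) (ht₀ : t₀ ∈ s) (hx₀ : x t₀ ∈ XVIII)
    (hsol : ∀ t ∈ s, HasDerivAt x (Fpf w (x t)) t)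
    (hmax : ∀ (y : ℝ → ℝ × ℝ × ℝ) (s' : Set ℝ), IsOpen s' → s'.OrdConnected → s ⊆ s' →
      (∀ t ∈ s', HasDerivAt y (Fpf w (y t)) t) → Set.EqOn x y s → s' = s) :
    s = Set.univ ∧ (∀ t, x t ∈ XVIII) ∧
      (∃ K : Set (ℝ × ℝ × ℝ), IsCompact K ∧ ∀ t, x t ∈ K) ∧
      (∀ p : ℝ × ℝ × ℝ,
        (∃ u : ℕ → ℝ, Tendsto u atTop atTop ∧ Tendsto (fun n => x (u n)) atTop (nhds p)) →
        p.2.2 = 0) ∧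
      (∀ p : ℝ × ℝ × ℝ,
        (∃ u : ℕ → ℝ, Tendsto u atTop atBot ∧ Tendsto (fun n => x (u n)) atTop (nhds p)) →
        p.1 = 1) := by
  obtain ⟨h1, h2, h3⟩ := (mem_XVIII_iff _).1 hx₀
  have h : IsSol w s (fun t => (x t).1) (fun t => (x t).2.1) (fun t => (x t).2.2) := by
    refine IsSol.of_mem hopen hconn ?_ ?_ ?_ ht₀ h1 h2 h3
    · intro t ht
      refine (hasFDerivAt_fst.comp_hasDerivAt t (hsol t ht)).congr_deriv ?_
      simp only [Fpf, dec, Om, ContinuousLinearMap.coe_fst']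
      ring
    · intro t ht
      refine (hasFDerivAt_fst.comp_hasDerivAt t
        (hasFDerivAt_snd.comp_hasDerivAt t (hsol t ht))).congr_deriv ?_
      simp only [Fpf, dec, Om, ContinuousLinearMap.coe_fst', ContinuousLinearMap.coe_snd']
      ring
    · intro t ht
      refine (hasFDerivAt_snd.comp_hasDerivAt t
        (hasFDerivAt_snd.comp_hasDerivAt t (hsol t ht))).congr_deriv ?_
      simp only [Fpf, dec, Om, ContinuousLinearMap.coe_snd']
      ring
  obtain ⟨C₁, hC₁⟩ := h.H_bdd_forward hw hconn ht₀
  obtain ⟨C₂, hC₂⟩ := h.H_bdd_backward hw hconn ht₀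
  set K : Set (ℝ × ℝ × ℝ) :=
    Set.Icc 1 (max C₁ C₂) ×ˢ Set.Icc (-1) 1 ×ˢ Set.Icc 0 4 with hKdef
  have hK : IsCompact K := isCompact_Icc.prod (isCompact_Icc.prod isCompact_Icc)
  have hxK : ∀ t ∈ s, x t ∈ K := by
    intro t ht
    have hS := h.abs_S_lt ht
    have hM := h.M_pos t ht
    refine ⟨⟨(h.one_lt t ht).le, ?_⟩, ⟨hS.1.le, hS.2.le⟩, ⟨hM.le, ?_⟩⟩
    · rcases le_total t₀ t with hle | hle
      · exact (hC₁ t ht hle).trans (le_max_left _ _)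
      · exact (hC₂ t ht hle).trans (le_max_right _ _)
    · have hb := (h.sq_bounds ht).2
      have hM0 : 0 < (x t).2.2 := hM
      change (x t).2.2 ≤ 4
      nlinarith [sq_nonneg (x t).2.1]
  have hfwd : ∀ t, t₀ ≤ t → t ∈ s :=
    mem_of_maximal (contDiff_Fpf w) hopen hconn ht₀ hK (fun t ht _ => hxK t ht) hsol hmax
  have hneg : ∀ {y : ℝ → ℝ × ℝ × ℝ} {v v' : ℝ × ℝ × ℝ} {t : ℝ}, HasDerivAt y v (-t) → v' = -v →
      HasDerivAt (fun t => y (-t)) v' t := by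
    intro y v v' t hy hv
    have := hy.scomp t (hasDerivAt_neg t)
    rw [hv]
    simpa [Function.comp_def] using this
  -- The time reversal of `x` is a maximal solution of the system with right-hand side `−Fpf w`.
  have hbwd : ∀ t, -t₀ ≤ t → t ∈ Neg.neg ⁻¹' s := by
    refine mem_of_maximal (F := fun p => -Fpf w p) (x := fun t => x (-t)) (contDiff_Fpf w).neg
      (hopen.preimage continuous_neg) ?_ (by simpa using ht₀) hK
      (fun t ht _ => hxK (-t) ht) (fun t ht => hneg (hsol (-t) ht) rfl) ?_
    · refine ⟨fun a ha b hb c hc => ?_⟩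
      exact hconn.out hb ha ⟨neg_le_neg hc.2, neg_le_neg hc.1⟩
    · intro y s' ho hc hss hy hxy
      have := hmax (fun t => y (-t)) (Neg.neg ⁻¹' s') (ho.preimage continuous_neg) ?_ ?_ ?_ ?_
      · rw [← this]
        ext t
        simp
      · refine ⟨fun a ha b hb c hcc => ?_⟩
        exact hc.out hb ha ⟨neg_le_neg hcc.2, neg_le_neg hcc.1⟩
      · intro t ht
        exact hss (by simpa using ht)
      · intro t ht
        exact hneg (hy (-t) ht) (neg_neg _).symm
      · intro t ht
        have := @hxy (-t) (by simpa using ht)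
        simpa using this
  have hs : s = Set.univ := by
    ext t
    simp only [Set.mem_univ, iff_true]
    rcases le_total t₀ t with hle | hle
    · exact hfwd t hle
    · simpa using hbwd (-t) (neg_le_neg hle)
  subst hs
  refine ⟨rfl, fun t => ?_, ⟨K, hK, fun t => hxK t (Set.mem_univ t)⟩, ?_, ?_⟩
  · exact (mem_XVIII_iff _).2
      ⟨h.one_lt t (Set.mem_univ t), h.M_pos t (Set.mem_univ t), h.Om_pos t (Set.mem_univ t)⟩
  · rintro p ⟨u, hu, hp⟩
    exact h.omega hw hu ((continuous_snd.comp continuous_snd).continuousAt.tendsto.comp hp)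
  · rintro p ⟨u, hu, hp⟩
    exact h.alpha hw hu (continuous_fst.continuousAt.tendsto.comp hp)
end
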